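/- For integers l ≥ 3 and d ≥ 1, let A be the (2l+1) × (2l+1) matrix with rows and columns indexed by v₁,…,v_l, u₁,…,u_l, u₀, whose entries are A_{v_i v_j} = 2d for i ≠ j, A_{v_i u_j} = A_{u_j v_i} = d+1 for i ≠ j, A_{v_i u_i} = A_{u_i v_i} = 0, A_{v_i u₀} = A_{u₀ v_i} = d, and all remaining entries zero. For each i ∈ {1, …, l}, the determinant of the (2l−1) × (2l−1) principal submatrix of A obtained by deleting the rows and columns indexed by u_i and u₀ equals (−1)^{l−2} · 2d · (l−1)(l−2) · (d+1)^{2(l−1)}. -/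

import Mathlib

open SimpleGraph Finset Matrix Polynomial

/-- The `(2l+1) × (2l+1)` matrix `A` indexed by `v₁, …, v_l` (the `Sum.inl` indices),
`u₁, …, u_l` (the `Sum.inr ∘ Sum.inl` indices) and `u₀` (the `Sum.inr (Sum.inr ())` index). -/
def matA (l d : ℕ) : Matrix (Fin l ⊕ Fin l ⊕ Unit) (Fin l ⊕ Fin l ⊕ Unit) ℝ :=
  Matrix.of fun x y =>
    match x, y with
    | Sum.inl i, Sum.inl j => if i = j then 0 else 2*d
    | Sum.inl i, Sum.inr (Sum.inl j) => if i = j then 0 else d+1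
    | Sum.inr (Sum.inl i), Sum.inl j => if i = j then 0 else d+1
    | Sum.inl _, Sum.inr (Sum.inr _) => d
    | Sum.inr (Sum.inr _), Sum.inl _ => d
    | _, _ => 0

/-!
Deleting `u₀` from `A` leaves the Kronecker product `!![2d, d+1; d+1, 0] ⊗ₖ K`, where `K` is the
adjacency matrix of the complete graph on `l` vertices. Deleting a further index turns the
determinant into a diagonal entry of the adjugate, and up to powers of determinants the adjugate of
a Kronecker product is the Kronecker product of the adjugates. What remains is `det K`, and the
same determinant for `l - 1` vertices, which is a diagonal entry of `adjugate K`.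
-/

open scoped Kronecker

section Adjugate

variable {R m n : Type*} [CommRing R] [Fintype m] [DecidableEq m] [Fintype n] [DecidableEq n]

lemma det_submatrix_ne_eq_adjugate_apply_self (A : Matrix n n R) (i : n) :
    (A.submatrix (Subtype.val : {j // j ≠ i} → n) Subtype.val).det = A.adjugate i i := by
  rw [adjugate_apply, twoBlockTriangular_det _ (· ≠ i)]
  · have : Unique {j // ¬j ≠ i} := ⟨⟨⟨i, by simp⟩⟩, fun j => Subtype.ext (not_not.mp j.2)⟩
    have hminor : (A.updateRow i (Pi.single i 1)).toSquareBlockProp (· ≠ i) =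
        A.submatrix Subtype.val Subtype.val := by
      ext j k
      simp [toSquareBlockProp_def, updateRow_ne j.2]
    have hcorner : ((A.updateRow i (Pi.single i 1)).toSquareBlockProp fun j => ¬j ≠ i).det = 1 := by
      rw [det_unique, toSquareBlockProp_def, of_apply, not_not.mp (default : {j // ¬j ≠ i}).2]
      simp
    rw [hminor, hcorner, mul_one]
  · intro j hj k hk
    rw [not_not.mp hj, updateRow_self, Pi.single_eq_of_ne hk]

lemma exists_mapMatrix_evalRingHom_zero_eq_and_isRegular_det (A : Matrix n n R) :
    ∃ A' : Matrix n n R[X], (evalRingHom 0).mapMatrix A' = A ∧ IsRegular A'.det := by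
  -- The determinant of `A + X • 1` is a monic polynomial.
  refine ⟨A.map C + (X : R[X]) • 1, ?_, Monic.isRegular ?_⟩
  · ext
    simp
  · rw [Monic.def, add_comm, leadingCoeff_det_X_one_add_C]

lemma adjugate_kronecker_of_isRegular_det {A : Matrix m m R} {B : Matrix n n R}
    (hA : IsRegular A.det) (hB : IsRegular B.det) :
    (A ⊗ₖ B).adjugate = (A.det ^ (Fintype.card n - 1) * B.det ^ (Fintype.card m - 1)) •
      (A.adjugate ⊗ₖ B.adjugate) := by
  cases isEmpty_or_nonempty m
  · ext ⟨i, _⟩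
    exact isEmptyElim i
  cases isEmpty_or_nonempty n
  · ext ⟨_, i⟩
    exact isEmptyElim i
  have hdet : IsLeftRegular (A ⊗ₖ B).det := by
    rw [det_kronecker]
    exact ((hA.pow _).mul (hB.pow _)).left
  refine (isRegular_of_isLeftRegular_det hdet).left
    (?_ : A ⊗ₖ B * (A ⊗ₖ B).adjugate = A ⊗ₖ B * _)
  calc A ⊗ₖ B * (A ⊗ₖ B).adjugate
      = (A.det ^ (Fintype.card n - 1) * B.det ^ (Fintype.card m - 1) * (A.det * B.det)) • 1 := by
        rw [mul_adjugate, det_kronecker, mul_mul_mul_comm,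
          pow_sub_one_mul Fintype.card_ne_zero, pow_sub_one_mul Fintype.card_ne_zero]
    _ = _ := by
        rw [Matrix.mul_smul, ← mul_kronecker_mul, mul_adjugate, mul_adjugate, smul_kronecker,
          kronecker_smul, one_kronecker_one, smul_smul, smul_smul, mul_assoc _ A.det]

lemma adjugate_kronecker (A : Matrix m m R) (B : Matrix n n R) :
    (A ⊗ₖ B).adjugate = (A.det ^ (Fintype.card n - 1) * B.det ^ (Fintype.card m - 1)) •
      (A.adjugate ⊗ₖ B.adjugate) := by
  obtain ⟨A', rfl, hA'⟩ := exists_mapMatrix_evalRingHom_zero_eq_and_isRegular_det A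
  obtain ⟨B', rfl, hB'⟩ := exists_mapMatrix_evalRingHom_zero_eq_and_isRegular_det B
  let f : R[X] →+* R := evalRingHom 0
  have map_kronecker (M : Matrix m m R[X]) (N : Matrix n n R[X]) :
      f.mapMatrix (M ⊗ₖ N) = f.mapMatrix M ⊗ₖ f.mapMatrix N := by
    ext
    simp
  have map_smul (r : R[X]) (M : Matrix (m × n) (m × n) R[X]) :
      f.mapMatrix (r • M) = f r • f.mapMatrix M := by
    ext
    simp
  rw [← map_kronecker, ← f.map_adjugate, adjugate_kronecker_of_isRegular_det hA' hB', map_smul,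
    map_kronecker, map_mul, map_pow, map_pow, f.map_det, f.map_det, f.map_adjugate, f.map_adjugate]

end Adjugate

section CompleteGraph

variable {V : Type*} [Fintype V] [DecidableEq V] (R : Type*) [CommRing R]

lemma det_adjMatrix_top :
    ((⊤ : SimpleGraph V).adjMatrix R).det =
      (-1) ^ Fintype.card V * (1 - (Fintype.card V : R)) := by
  have h : (⊤ : SimpleGraph V).adjMatrix R =
      -(1 + replicateCol Unit (1 : V → R) * replicateRow Unit (-1 : V → R)) := by
    ext v w
    by_cases hvw : v = w <;> simp [Matrix.mul_apply, hvw]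
  rw [h, det_neg, det_one_add_replicateCol_mul_replicateRow]
  simp [dotProduct, sub_eq_add_neg]

lemma adjugate_adjMatrix_top_apply_self (v : V) :
    ((⊤ : SimpleGraph V).adjMatrix R).adjugate v v =
      (-1) ^ (Fintype.card V - 1) * (2 - (Fintype.card V : R)) := by
  have hminor : ((⊤ : SimpleGraph V).adjMatrix R).submatrix
      (Subtype.val : {w // w ≠ v} → V) Subtype.val = (⊤ : SimpleGraph {w // w ≠ v}).adjMatrix R :=
    (Embedding.completeGraph (Function.Embedding.subtype (· ≠ v))).submatrix_adjMatrix R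
  have hcard : Fintype.card {w // w ≠ v} = Fintype.card V - 1 := by
    simp [Fintype.card_subtype_compl]
  rw [← det_submatrix_ne_eq_adjugate_apply_self, hminor, det_adjMatrix_top, hcard,
    Nat.cast_pred (Fintype.card_pos_iff.mpr ⟨v⟩)]
  ring

variable {R} in
lemma adjugate_kronecker_adjMatrix_top_apply_self (p c : R) (v : V) :
    (!![p, c; c, 0] ⊗ₖ (⊤ : SimpleGraph V).adjMatrix R).adjugate (1, v) (1, v) =
      (-1) ^ Fintype.card V * p * (((Fintype.card V : R) - 1) * ((Fintype.card V : R) - 2)) *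
        c ^ (2 * (Fintype.card V - 1)) := by
  rw [adjugate_kronecker, Matrix.smul_apply, kronecker_apply, adjugate_adjMatrix_top_apply_self,
    adjugate_fin_two_of, det_fin_two_of, det_adjMatrix_top]
  obtain ⟨n, hn⟩ := Nat.exists_eq_add_one.mpr (Fintype.card_pos_iff.mpr ⟨v⟩)
  have hsign : (-1 : R) ^ n * (-1) ^ n = 1 := by rw [← mul_pow, neg_one_mul, neg_neg, one_pow]
  simp only [of_apply, cons_val_one, cons_val_fin_one, smul_eq_mul, Fintype.card_fin, hn,
    Nat.add_sub_cancel, Nat.cast_add_one]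
  linear_combination (p * c ^ (2 * n) * n * (1 - n) * (-1) ^ n) * hsign

end CompleteGraph

/-- The indices `v_j` and `u_j` of `matA`, as the pairs `(0, j)` and `(1, j)`; this is the indexing
in which the corresponding principal submatrix is a Kronecker product. -/
def uvIndex (l : ℕ) : Fin 2 × Fin l → Fin l ⊕ Fin l ⊕ Unit
  | (0, j) => Sum.inl j
  | (1, j) => Sum.inr (Sum.inl j)

lemma matA_submatrix_uvIndex (l d : ℕ) :
    (matA l d).submatrix (uvIndex l) (uvIndex l) =
      !![2 * (d : ℝ), (d : ℝ) + 1; (d : ℝ) + 1, 0] ⊗ₖ (⊤ : SimpleGraph (Fin l)).adjMatrix ℝ := by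
  ext ⟨a, j⟩ ⟨b, k⟩
  fin_cases a <;> fin_cases b <;> by_cases hjk : j = k <;> simp [matA, uvIndex, hjk]

lemma uvIndex_injective (l : ℕ) : Function.Injective (uvIndex l) := by
  rintro ⟨a, j⟩ ⟨b, k⟩
  fin_cases a <;> fin_cases b <;> simp [uvIndex]

lemma uvIndex_ne {l : ℕ} {i : Fin l} {y : Fin 2 × Fin l} (hy : y ≠ (1, i)) :
    uvIndex l y ≠ Sum.inr (Sum.inl i) ∧ uvIndex l y ≠ Sum.inr (Sum.inr ()) := by
  refine ⟨(uvIndex_injective l).ne hy, ?_⟩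
  obtain ⟨a, j⟩ := y
  fin_cases a <;> simp [uvIndex]

/-- The indices of `matA` other than `u_i` and `u₀`, in the pair indexing of `uvIndex`. -/
noncomputable def minorIndexEquiv {l : ℕ} (i : Fin l) :
    {y : Fin 2 × Fin l // y ≠ (1, i)} ≃
      {x : Fin l ⊕ Fin l ⊕ Unit // x ≠ Sum.inr (Sum.inl i) ∧ x ≠ Sum.inr (Sum.inr ())} :=
  Equiv.ofBijective (fun y => ⟨uvIndex l y.1, uvIndex_ne y.2⟩) <| by
    refine ⟨fun y z hyz => Subtype.ext (uvIndex_injective l (congrArg Subtype.val hyz)), ?_⟩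
    rintro ⟨j | j | _, hu, h₀⟩
    · exact ⟨⟨(0, j), by simp⟩, rfl⟩
    · exact ⟨⟨(1, j), by simpa using hu⟩, rfl⟩
    · exact absurd rfl h₀

/-- For `l ≥ 3`, `d ≥ 1` and each `i`, the principal minor of `A` obtained by deleting the rows
and columns indexed by `u_i` and `u₀` equals `(-1)^(l-2) · 2d · (l-1)(l-2) · (d+1)^(2(l-1))`. -/
theorem stmt16 (l d : ℕ) (hl : 3 ≤ l) (hd : 1 ≤ d) (i : Fin l) :
    ((matA l d).submatrix
        (fun x : {x : Fin l ⊕ Fin l ⊕ Unit //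
            x ≠ Sum.inr (Sum.inl i) ∧ x ≠ Sum.inr (Sum.inr ())} => x.1)
        (fun x : {x : Fin l ⊕ Fin l ⊕ Unit //
            x ≠ Sum.inr (Sum.inl i) ∧ x ≠ Sum.inr (Sum.inr ())} => x.1)).det
      = (-1 : ℝ)^(l-2) * (2*(d:ℝ)) * (((l:ℝ)-1) * ((l:ℝ)-2)) * ((d:ℝ)+1)^(2*(l-1)) := by
  rw [← det_submatrix_equiv_self (minorIndexEquiv i)]
  change (((matA l d).submatrix (uvIndex l) (uvIndex l)).submatrix Subtype.val Subtype.val).det = _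
  rw [matA_submatrix_uvIndex, det_submatrix_ne_eq_adjugate_apply_self,
    adjugate_kronecker_adjMatrix_top_apply_self, Fintype.card_fin]
  obtain ⟨n, rfl⟩ := Nat.exists_eq_add_of_le' hl
  simp [pow_succ]
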